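/- Let α > −1 and n ≥ 1, let ψ be analytic on 𝔻, not identically 0, and φ a nonconstant analytic self-map of 𝔻, and suppose D_{ψ,φ,n} is bounded and J-symmetric on A_α². Then ψ^{(m)}(0) = 0 for every integer 0 ≤ m < n, and ψ^{(n)}(0) ≠ 0. -/

import Mathlib

open Complex Metric Set

noncomputable section

/-- The open unit disk in `ℂ`. -/
def unitDisk : Set ℂ := Metric.ball 0 1

/-- `wb2 α j` is `β(j)² = j!·Γ(α+2)/Γ(j+α+2)`, the square of the norm of `z^j` in `A_α²`. -/
def wb2 (α : ℝ) (j : ℕ) : ℝ :=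
  (j.factorial : ℝ) * Real.Gamma (α + 2) / Real.Gamma ((j : ℝ) + α + 2)

/-- The `j`-th Taylor coefficient of `f` at `0`. -/
def tcoeff (f : ℂ → ℂ) (j : ℕ) : ℂ := iteratedDeriv j f 0 / (j.factorial : ℂ)

/-- An abstract model of the weighted Bergman space `A_α²`: a complex Hilbert space `H`
whose elements are (identified with) the analytic functions on the unit disk with
square-summable weighted Taylor coefficients, with the weighted `ℓ²` inner product. -/
structure BergmanModel (α : ℝ) (H : Type) [NormedAddCommGroup H]
    [InnerProductSpace ℂ H] where
  emb : H →ₗ[ℂ] (ℂ → ℂ)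
  analyticOn : ∀ f : H, AnalyticOnNhd ℂ (emb f) unitDisk
  summable_norm : ∀ f : H, Summable (fun j => ‖tcoeff (emb f) j‖ ^ 2 * wb2 α j)
  inj : ∀ f g : H, Set.EqOn (emb f) (emb g) unitDisk → f = g
  exists_rep : ∀ F : ℂ → ℂ, AnalyticOnNhd ℂ F unitDisk →
      Summable (fun j => ‖tcoeff F j‖ ^ 2 * wb2 α j) →
      ∃ f : H, Set.EqOn (emb f) F unitDisk
  inner_eq : ∀ f g : H,
      (@inner ℂ H _ f g) =
        ∑' j : ℕ, (starRingEnd ℂ) (tcoeff (emb f) j) * tcoeff (emb g) j * (wb2 α j : ℂ)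

/-- The derivative-evaluation kernel `K_w^{(m)}(z) = m!·z^m / (β(m)²·(1-conj(w)·z)^(m+α+2))`. -/
def kern (α : ℝ) (m : ℕ) (w z : ℂ) : ℂ :=
  (m.factorial : ℂ) * z ^ m /
    ((wb2 α m : ℂ) * (1 - (starRingEnd ℂ) w * z) ^ ((m : ℂ) + (α : ℂ) + 2))

/-!
Symmetry with respect to `J` makes the matrix of `T = D_{ψ,φ,n}` in the orthogonal basis of
monomials symmetric, up to the weights: the coefficient of `z^j` in `T z^i` vanishes if and only if
the coefficient of `z^i` in `T z^j` does. Now `T z^m = 0` for `m < n` and `T z^n = n! ψ`, so the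
coefficients of `ψ` below `n` vanish. If the `n`-th one vanished too, then `ψ`, and with it every
`T z^i = O(ψ)`, would vanish to order `n + 1` at `0`; by symmetry all coefficients of `ψ` would
be zero.
-/

open Filter Asymptotics
open scoped ComplexConjugate Topology

section AnalyticOrder

variable {𝕜 E F : Type*} [NontriviallyNormedField 𝕜]
  [NormedAddCommGroup E] [NormedSpace 𝕜 E] [NormedAddCommGroup F] [NormedSpace 𝕜 F]

lemma analyticOrderAt_le_of_isBigO {f : 𝕜 → E} {g : 𝕜 → F} {z₀ : 𝕜}
    (hf : AnalyticAt 𝕜 f z₀) (hg : AnalyticAt 𝕜 g z₀) (hfg : f =O[𝓝 z₀] g) :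
    analyticOrderAt g z₀ ≤ analyticOrderAt f z₀ := by
  by_contra! hlt
  obtain ⟨k, hk⟩ := ENat.ne_top_iff_exists.mp hlt.ne_top
  obtain ⟨u, hu, hu₀, hfu⟩ := hf.analyticOrderAt_eq_natCast.mp hk.symm
  have hk_succ : ((k + 1 : ℕ) : ℕ∞) ≤ analyticOrderAt g z₀ := by
    rw [← hk] at hlt
    exact_mod_cast Order.add_one_le_of_lt hlt
  obtain ⟨v, hv, hgv⟩ := (natCast_le_analyticOrderAt hg).mp hk_succ
  have huv : u =O[𝓝[≠] z₀] fun z ↦ (z - z₀) • v z := by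
    obtain ⟨C, hC⟩ := hfg.bound
    refine .of_bound C ?_
    filter_upwards [nhdsWithin_le_nhds (hC.and (hfu.and hgv)), self_mem_nhdsWithin]
      with z ⟨hz, hfz, hgz⟩ hne
    have hpos : 0 < ‖z - z₀‖ ^ k := pow_pos (norm_pos_iff.mpr (sub_ne_zero.mpr hne)) k
    rw [hfz, hgz, pow_succ, mul_smul, norm_smul, norm_smul, norm_pow, mul_left_comm] at hz
    exact le_of_mul_le_mul_left hz hpos
  have hv_lim : Tendsto (fun z ↦ (z - z₀) • v z) (𝓝[≠] z₀) (𝓝 0) := by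
    have hcont : ContinuousAt (fun z ↦ (z - z₀) • v z) z₀ :=
      (continuousAt_id.sub continuousAt_const).smul hv.continuousAt
    simpa using hcont.tendsto.mono_left nhdsWithin_le_nhds
  exact hu₀ (tendsto_nhds_unique (hu.continuousAt.tendsto.mono_left nhdsWithin_le_nhds)
    (huv.trans_tendsto hv_lim))

end AnalyticOrder

lemma iteratedDeriv_conj_conj {𝕜 : Type*} [RCLike 𝕜] (f : 𝕜 → 𝕜) (k : ℕ) :
    iteratedDeriv k (conj ∘ f ∘ conj) = conj ∘ iteratedDeriv k f ∘ conj := by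
  induction k with
  | zero => simp only [iteratedDeriv_zero]
  | succ k ih => rw [iteratedDeriv_succ, ih, deriv_conj_conj, iteratedDeriv_succ]

lemma isOpen_unitDisk : IsOpen unitDisk := isOpen_ball

lemma zero_mem_unitDisk : (0 : ℂ) ∈ unitDisk := mem_ball_self one_pos

lemma norm_lt_one_of_mem_unitDisk {z : ℂ} (hz : z ∈ unitDisk) : ‖z‖ < 1 := mem_ball_zero_iff.mp hz

lemma conj_mem_unitDisk {z : ℂ} (hz : z ∈ unitDisk) : conj z ∈ unitDisk :=
  mem_ball_zero_iff.mpr ((norm_conj z).trans_lt (norm_lt_one_of_mem_unitDisk hz))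

section TaylorCoefficients

variable {f g : ℂ → ℂ}

lemma tcoeff_congr (h : EqOn f g unitDisk) (k : ℕ) : tcoeff f k = tcoeff g k := by
  rw [tcoeff, tcoeff, h.iteratedDeriv_of_isOpen isOpen_unitDisk k zero_mem_unitDisk]

lemma tcoeff_zero (k : ℕ) : tcoeff 0 k = 0 := by
  rw [tcoeff, iteratedDeriv_const_zero, zero_div]

lemma tcoeff_eq_zero_iff {k : ℕ} : tcoeff f k = 0 ↔ iteratedDeriv k f 0 = 0 := by
  simp [tcoeff, k.factorial_ne_zero]

lemma tcoeff_const_mul (c : ℂ) (f : ℂ → ℂ) (k : ℕ) :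
    tcoeff (fun z ↦ c * f z) k = c * tcoeff f k := by
  rw [tcoeff, tcoeff, iteratedDeriv_const_mul_field, mul_div_assoc]

lemma tcoeff_pow (i k : ℕ) : tcoeff (fun z ↦ z ^ i) k = if k = i then 1 else 0 := by
  rw [tcoeff, iteratedDeriv_fun_pow_zero]
  split_ifs with h <;> simp [h, i.factorial_ne_zero]

lemma tcoeff_conj_conj (f : ℂ → ℂ) (k : ℕ) : tcoeff (conj ∘ f ∘ conj) k = conj (tcoeff f k) := by
  simp [tcoeff, iteratedDeriv_conj_conj]

lemma natCast_le_analyticOrderAt_iff_tcoeff_eq_zero (hf : AnalyticAt ℂ f 0) {n : ℕ} :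
    n ≤ analyticOrderAt f 0 ↔ ∀ k < n, tcoeff f k = 0 := by
  simp only [natCast_le_analyticOrderAt_iff_iteratedDeriv_eq_zero hf, tcoeff_eq_zero_iff]

end TaylorCoefficients

namespace BergmanModel

variable {α : ℝ} {H : Type} [NormedAddCommGroup H] [InnerProductSpace ℂ H]
  (M : BergmanModel α H)

lemma exists_eqOn_pow (i : ℕ) : ∃ f : H, EqOn (M.emb f) (fun z ↦ z ^ i) unitDisk := by
  refine M.exists_rep _ (fun z _ ↦ by fun_prop) (summable_of_ne_finset_zero (s := {i}) ?_)
  intro j hj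
  rw [tcoeff_pow, if_neg (Finset.notMem_singleton.mp hj)]
  simp

/-- The monomial `z ^ i` as an element of the model; outside the disk its values are arbitrary. -/
def monomial (i : ℕ) : H := (M.exists_eqOn_pow i).choose

lemma emb_monomial_eqOn (i : ℕ) : EqOn (M.emb (M.monomial i)) (fun z ↦ z ^ i) unitDisk :=
  (M.exists_eqOn_pow i).choose_spec

lemma tcoeff_monomial (i k : ℕ) : tcoeff (M.emb (M.monomial i)) k = if k = i then 1 else 0 := by
  rw [tcoeff_congr (M.emb_monomial_eqOn i), tcoeff_pow]

lemma inner_monomial_left (i : ℕ) (f : H) :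
    inner ℂ (M.monomial i) f = tcoeff (M.emb f) i * wb2 α i := by
  rw [M.inner_eq, tsum_eq_single i]
  · simp [tcoeff_monomial]
  · intro j hj
    simp [tcoeff_monomial, hj]

lemma eq_zero_of_tcoeff_eq_zero {f : H} (h : ∀ k, tcoeff (M.emb f) k = 0) : f = 0 := by
  rw [← inner_self_eq_zero (𝕜 := ℂ), M.inner_eq]
  simp [h]

-- `wb2 α i` is the squared norm of the nonzero vector `z ^ i`.
lemma wb2_ne_zero (M : BergmanModel α H) (i : ℕ) : wb2 α i ≠ 0 := by
  intro h
  have h_zero : M.monomial i = 0 := by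
    rw [← inner_self_eq_zero (𝕜 := ℂ), inner_monomial_left, h, ofReal_zero, mul_zero]
  have h_one := M.tcoeff_monomial i i
  rw [h_zero, map_zero, tcoeff_zero, if_pos rfl] at h_one
  exact zero_ne_one h_one

/-- The map `J` on the model is the conjugation `(J f)(z) = conj (f (conj z))`. -/
def IsConjugation (J : H → H) : Prop :=
  ∀ f, ∀ z ∈ unitDisk, M.emb (J f) z = conj (M.emb f (conj z))

/-- The operator `T` on the model is the weighted composition–differentiation operator
`D_{ψ,φ,n}`, that is, `T f = ψ · (f⁽ⁿ⁾ ∘ φ)` on the disk. -/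
def IsWeightedCompDiff (ψ φ : ℂ → ℂ) (n : ℕ) (T : H →L[ℂ] H) : Prop :=
  ∀ f, ∀ z ∈ unitDisk, M.emb (T f) z = ψ z * iteratedDeriv n (M.emb f) (φ z)

variable {M}

section Conjugation

variable {J : H → H}

lemma IsConjugation.map_monomial (hJ : M.IsConjugation J) (i : ℕ) :
    J (M.monomial i) = M.monomial i := by
  refine M.inj _ _ fun z hz ↦ ?_
  simp [hJ _ z hz, M.emb_monomial_eqOn i hz, M.emb_monomial_eqOn i (conj_mem_unitDisk hz)]

lemma IsConjugation.tcoeff_map (hJ : M.IsConjugation J) (f : H) (k : ℕ) :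
    tcoeff (M.emb (J f)) k = conj (tcoeff (M.emb f) k) := by
  rw [← tcoeff_conj_conj, tcoeff_congr (hJ f)]
  rfl

variable [CompleteSpace H]

lemma tcoeff_adjoint_monomial_mul_wb2 (T : H →L[ℂ] H) (i j : ℕ) :
    tcoeff (M.emb (T.adjoint (M.monomial i))) j * wb2 α j =
      conj (tcoeff (M.emb (T (M.monomial j))) i) * wb2 α i := by
  rw [← inner_monomial_left, T.adjoint_inner_right, ← inner_conj_symm, inner_monomial_left,
    map_mul, conj_ofReal]

variable {T : H →L[ℂ] H}

lemma IsConjugation.tcoeff_mul_wb2_comm (hJ : M.IsConjugation J)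
    (hT : ∀ f, J (T.adjoint (J f)) = T f) (i j : ℕ) :
    tcoeff (M.emb (T (M.monomial i))) j * wb2 α j =
      tcoeff (M.emb (T (M.monomial j))) i * wb2 α i := by
  rw [← hT (M.monomial i), hJ.map_monomial, hJ.tcoeff_map]
  simpa using congrArg conj (tcoeff_adjoint_monomial_mul_wb2 T i j)

lemma IsConjugation.tcoeff_eq_zero_comm (hJ : M.IsConjugation J)
    (hT : ∀ f, J (T.adjoint (J f)) = T f) {i j : ℕ} :
    tcoeff (M.emb (T (M.monomial i))) j = 0 ↔ tcoeff (M.emb (T (M.monomial j))) i = 0 := by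
  have h := hJ.tcoeff_mul_wb2_comm hT i j
  have hw (k : ℕ) : (wb2 α k : ℂ) ≠ 0 := ofReal_ne_zero.mpr (M.wb2_ne_zero k)
  rw [← mul_eq_zero_iff_right (hw j), h, mul_eq_zero_iff_right (hw i)]

end Conjugation

section WeightedCompDiff

variable {ψ φ : ℂ → ℂ} {n : ℕ} {T : H →L[ℂ] H}

lemma IsWeightedCompDiff.emb_monomial_eqOn (hT : M.IsWeightedCompDiff ψ φ n T)
    (hφ : MapsTo φ unitDisk unitDisk) (i : ℕ) :
    EqOn (M.emb (T (M.monomial i)))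
      (fun z ↦ ψ z * (i.descFactorial n * φ z ^ (i - n))) unitDisk := by
  intro z hz
  rw [hT _ z hz, (M.emb_monomial_eqOn i).iteratedDeriv_of_isOpen isOpen_unitDisk n (hφ hz),
    iteratedDeriv_pow]

lemma IsWeightedCompDiff.map_monomial_of_lt (hT : M.IsWeightedCompDiff ψ φ n T)
    (hφ : MapsTo φ unitDisk unitDisk) {m : ℕ} (hm : m < n) : T (M.monomial m) = 0 := by
  refine M.inj _ _ fun z hz ↦ ?_
  simp [hT.emb_monomial_eqOn hφ m hz, Nat.descFactorial_of_lt hm]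

lemma IsWeightedCompDiff.emb_monomial_self_eqOn (hT : M.IsWeightedCompDiff ψ φ n T)
    (hφ : MapsTo φ unitDisk unitDisk) :
    EqOn (M.emb (T (M.monomial n))) (fun z ↦ n.factorial * ψ z) unitDisk := by
  intro z hz
  simp [hT.emb_monomial_eqOn hφ n hz, Nat.descFactorial_self, mul_comm]

lemma IsWeightedCompDiff.tcoeff_monomial_self_eq_zero_iff (hT : M.IsWeightedCompDiff ψ φ n T)
    (hφ : MapsTo φ unitDisk unitDisk) {k : ℕ} :
    tcoeff (M.emb (T (M.monomial n))) k = 0 ↔ iteratedDeriv k ψ 0 = 0 := by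
  simp [tcoeff_congr (hT.emb_monomial_self_eqOn hφ), tcoeff_const_mul, n.factorial_ne_zero,
    tcoeff_eq_zero_iff]

lemma IsWeightedCompDiff.emb_monomial_isBigO (hT : M.IsWeightedCompDiff ψ φ n T)
    (hφ : MapsTo φ unitDisk unitDisk) (i : ℕ) :
    M.emb (T (M.monomial i)) =O[𝓝 0] M.emb (T (M.monomial n)) := by
  refine .of_bound (i.descFactorial n) ?_
  filter_upwards [isOpen_unitDisk.mem_nhds zero_mem_unitDisk] with z hz
  have hpow : ‖φ z‖ ^ (i - n) ≤ 1 :=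
    pow_le_one₀ (norm_nonneg _) (norm_lt_one_of_mem_unitDisk (hφ hz)).le
  have hfact : (1 : ℝ) ≤ n.factorial := mod_cast n.factorial_pos
  calc ‖M.emb (T (M.monomial i)) z‖
      = i.descFactorial n * (‖φ z‖ ^ (i - n) * ‖ψ z‖) := by
        rw [hT.emb_monomial_eqOn hφ i hz, norm_mul, norm_mul, norm_pow, norm_natCast]
        ring
    _ ≤ i.descFactorial n * (n.factorial * ‖ψ z‖) := by gcongr; exact hpow.trans hfact
    _ = i.descFactorial n * ‖M.emb (T (M.monomial n)) z‖ := by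
        rw [hT.emb_monomial_self_eqOn hφ hz, norm_mul, norm_natCast]

lemma IsWeightedCompDiff.tcoeff_monomial_eq_zero (hT : M.IsWeightedCompDiff ψ φ n T)
    (hφ : MapsTo φ unitDisk unitDisk) {k : ℕ} (hψ : ∀ m ≤ k, iteratedDeriv m ψ 0 = 0) (i : ℕ) :
    tcoeff (M.emb (T (M.monomial i))) k = 0 := by
  have han (j : ℕ) : AnalyticAt ℂ (M.emb (T (M.monomial j))) 0 :=
    M.analyticOn _ 0 zero_mem_unitDisk
  have hn : ((k + 1 : ℕ) : ℕ∞) ≤ analyticOrderAt (M.emb (T (M.monomial n))) 0 :=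
    (natCast_le_analyticOrderAt_iff_tcoeff_eq_zero (han n)).mpr fun m hm ↦
      (hT.tcoeff_monomial_self_eq_zero_iff hφ).mpr (hψ m (Nat.le_of_lt_succ hm))
  have hi := hn.trans (analyticOrderAt_le_of_isBigO (han i) (han n) (hT.emb_monomial_isBigO hφ i))
  exact (natCast_le_analyticOrderAt_iff_tcoeff_eq_zero (han i)).mp hi k k.lt_succ_self

end WeightedCompDiff

end BergmanModel

theorem stmt_3_general {α : ℝ} {n : ℕ} {H : Type} [NormedAddCommGroup H]
    [InnerProductSpace ℂ H] [CompleteSpace H] {M : BergmanModel α H} {ψ φ : ℂ → ℂ}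
    (hψ : ∃ z ∈ unitDisk, ψ z ≠ 0) (hφ : MapsTo φ unitDisk unitDisk)
    {T : H →L[ℂ] H} (hT : M.IsWeightedCompDiff ψ φ n T)
    {J : H → H} (hJ : M.IsConjugation J) (hsym : ∀ f, J (T.adjoint (J f)) = T f) :
    (∀ m < n, iteratedDeriv m ψ 0 = 0) ∧ iteratedDeriv n ψ 0 ≠ 0 := by
  have hlow : ∀ m < n, iteratedDeriv m ψ 0 = 0 := by
    intro m hm
    rw [← hT.tcoeff_monomial_self_eq_zero_iff hφ, hJ.tcoeff_eq_zero_comm hsym,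
      hT.map_monomial_of_lt hφ hm, map_zero, tcoeff_zero]
  refine ⟨hlow, fun hn ↦ ?_⟩
  have hle : ∀ m ≤ n, iteratedDeriv m ψ 0 = 0 := fun m hm ↦
    hm.lt_or_eq.elim (hlow m) fun h ↦ h ▸ hn
  have hzero : T (M.monomial n) = 0 := M.eq_zero_of_tcoeff_eq_zero fun i ↦
    (hJ.tcoeff_eq_zero_comm hsym).mpr (hT.tcoeff_monomial_eq_zero hφ hle i)
  obtain ⟨z, hz, hψz⟩ := hψ
  have hTz := hT.emb_monomial_self_eqOn hφ hz
  simp [hzero, n.factorial_ne_zero, hψz] at hTz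

/-- If `D_{ψ,φ,n}` is bounded and `J`-symmetric on `A_α²`, then
`ψ⁽ᵐ⁾(0) = 0` for all `0 ≤ m < n`, and `ψ⁽ⁿ⁾(0) ≠ 0`. -/
theorem stmt_3 (α : ℝ) (hα : -1 < α) (n : ℕ) (hn : 1 ≤ n)
    (H : Type) [NormedAddCommGroup H] [InnerProductSpace ℂ H] [CompleteSpace H]
    (M : BergmanModel α H)
    (ψ : ℂ → ℂ) (hψa : AnalyticOnNhd ℂ ψ unitDisk)
    (hψ0 : ∃ z ∈ unitDisk, ψ z ≠ 0)
    (φ : ℂ → ℂ) (hφa : AnalyticOnNhd ℂ φ unitDisk)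
    (hφm : ∀ z ∈ unitDisk, φ z ∈ unitDisk)
    (hφnc : ∃ z ∈ unitDisk, ∃ w ∈ unitDisk, φ z ≠ φ w)
    (T : H →L[ℂ] H)
    (hT : ∀ f : H, ∀ z ∈ unitDisk,
      M.emb (T f) z = ψ z * iteratedDeriv n (M.emb f) (φ z))
    -- `Jm` is the conjugation `(Jf)(z) = conj(f(conj z))` on the model `H`
    (Jm : H → H)
    (hJm : ∀ f : H, ∀ z ∈ unitDisk,
      M.emb (Jm f) z = (starRingEnd ℂ) (M.emb f ((starRingEnd ℂ) z)))
    -- `T` is `J`-symmetric: `J T* J = T`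
    (hsym : ∀ f : H, Jm (ContinuousLinearMap.adjoint T (Jm f)) = T f) :
    (∀ m < n, iteratedDeriv m ψ 0 = 0) ∧ iteratedDeriv n ψ 0 ≠ 0 :=
  stmt_3_general hψ0 hφm hT hJm hsym
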